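/- Let ν ∈ ℂ \ {0, 2, 4, …}, and let x, x' ∈ ℝ² be given in polar coordinates by x = (r cos φ, r sin φ), x' = (r' cos φ', r' sin φ') with r, r' > 0 and r ≠ r'. Then ‖x − x'‖^ν = ( e^{iπ(ν+1)/2} / Γ(−ν/2) ) · ( (r_>² − r_<²)^{(ν+1)/2} / √(π r r') ) · Σ_{m=−∞}^∞ e^{im(φ−φ')} Q_{m−1/2}^{−(ν+1)/2}((r² + r'²)/(2rr')), where r_< := min{r, r'} and r_> := max{r, r'}, and where Q_{m−1/2}^{−(ν+1)/2} = Q_{−m−1/2}^{−(ν+1)/2} for negative indices (the degree is symmetric about −1/2). -/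

import Mathlib

open Complex

/-- Pochhammer symbol (rising factorial) `(a)_k = a (a+1) ⋯ (a+k-1)`. -/
noncomputable def poch (a : ℂ) (k : ℕ) : ℂ := ∏ i ∈ Finset.range k, (a + (i : ℂ))

/-- Gauss hypergeometric function `₂F₁(a,b;c;w)` as a series. -/
noncomputable def hyp2F1 (a b c w : ℂ) : ℂ :=
  ∑' k : ℕ, poch a k * poch b k / (poch c k * (Nat.factorial k : ℂ)) * w ^ k

/-- Terminating generalized hypergeometric function `₃F₂(-m,a₂,a₃;b₁,b₂;1)`. -/
noncomputable def hyp3F2 (m : ℕ) (a2 a3 b1 b2 : ℂ) : ℂ :=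
  ∑ j ∈ Finset.range (m + 1),
    poch (-(m : ℂ)) j * poch a2 j * poch a3 j /
      (poch b1 j * poch b2 j * (Nat.factorial j : ℂ))

/-- Gegenbauer polynomial `C_n^μ(x)`. -/
noncomputable def gegenbauerC (n : ℕ) (μ : ℂ) (x : ℂ) : ℂ :=
  poch (2 * μ) n / (Nat.factorial n : ℂ) *
    ∑ j ∈ Finset.range (n + 1),
      poch (-(n : ℂ)) j * poch ((n : ℂ) + 2 * μ) j /
          (poch (μ + 1 / 2) j * (Nat.factorial j : ℂ)) * ((1 - x) / 2) ^ j

/-- Associated Legendre function of the second kind `Q_ν^μ(z)` (principal branches). -/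
noncomputable def legendreQ (ν μ z : ℂ) : ℂ :=
  (Real.sqrt Real.pi : ℂ) * Complex.exp (Real.pi * I * μ) * Complex.Gamma (ν + μ + 1) *
      (z ^ 2 - 1) ^ (μ / 2) /
      ((2 : ℂ) ^ (ν + 1) * Complex.Gamma (ν + 3 / 2) * z ^ (ν + μ + 1)) *
    hyp2F1 ((ν + μ + 2) / 2) ((ν + μ + 1) / 2) (ν + 3 / 2) (1 / z ^ 2)

/-- Legendre polynomial `P_n(x)`. -/
noncomputable def legendrePoly (n : ℕ) (x : ℂ) : ℂ :=
  ∑ j ∈ Finset.range (n + 1),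
    poch (-(n : ℂ)) j * poch ((n : ℂ) + 1) j / (poch 1 j * (Nat.factorial j : ℂ)) *
      ((1 - x) / 2) ^ j

/-- Chebyshev polynomial of the second kind `U_n(x)`. -/
noncomputable def chebyshevU (n : ℕ) (x : ℂ) : ℂ :=
  ((n : ℂ) + 1) *
    ∑ j ∈ Finset.range (n + 1),
      poch (-(n : ℂ)) j * poch ((n : ℂ) + 2) j / (poch (3 / 2) j * (Nat.factorial j : ℂ)) *
        ((1 - x) / 2) ^ j

lemma poch_eq (a : ℂ) (n : ℕ) : poch a n = (ascPochhammer ℂ n).eval a := by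
  induction n with
  | zero => simp [poch]
  | succ n ih =>
    rw [ascPochhammer_succ_right]
    simp only [poch, Finset.prod_range_succ] at ih ⊢
    rw [ih]; simp

lemma choose_eq_poch (a : ℂ) (n : ℕ) :
    Ring.choose (a + n - 1) n = poch a n / (n.factorial : ℂ) := by
  rw [← Ring.multichoose_eq, eq_div_iff (by exact_mod_cast n.factorial_ne_zero), poch_eq]
  have h := Ring.factorial_nsmul_multichoose_eq_ascPochhammer a n
  rw [Polynomial.ascPochhammer_smeval_eq_eval] at h
  rw [← h, nsmul_eq_mul, mul_comm]

lemma binom_hasSum (a w : ℂ) (hw : ‖w‖ < 1) :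
    HasSum (fun n : ℕ => poch a n / (n.factorial : ℂ) * w ^ n) ((1 - w) ^ (-a)) := by
  have h := Complex.one_div_one_sub_cpow_hasFPowerSeriesOnBall_zero a
  have h2 := h.hasSum (y := w) (by simpa [enorm_eq_nnnorm] using! hw)
  simpa [cpow_neg, FormalMultilinearSeries.ofScalars, choose_eq_poch] using h2

lemma binom_summable (a w : ℂ) (hw : ‖w‖ < 1) :
    Summable (fun n : ℕ => ‖poch a n / (n.factorial : ℂ) * w ^ n‖) :=
  (binom_hasSum a w hw).summable.norm

lemma double_summable (a : ℂ) (t : ℝ) (ht : 0 ≤ t) (ht2 : 2 * t < 1) (u v : ℂ)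
    (hu : ‖u‖ = 1) (hv : ‖v‖ = 1) :
    Summable (fun p : ℕ × ℕ => poch a (p.1 + p.2) / ((p.1.factorial : ℂ) * (p.2.factorial : ℂ))
      * (t : ℂ) ^ (p.1 + p.2) * (u ^ p.1 * v ^ p.2)) := by
  apply Summable.of_norm
  rw [← Finset.HasAntidiagonal.sigmaAntidiagonalEquivProd.summable_iff]
  refine (summable_sigma_of_nonneg (fun _ => norm_nonneg _)).mpr ⟨fun n => (hasSum_fintype _).summable, ?_⟩
  convert binom_summable a ((2 * t : ℝ) : ℂ) (by simpa [abs_of_nonneg ht] using ht2) using 2 with n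
  rw [tsum_fintype, Finset.univ_eq_attach]
  simp only [Function.comp, Finset.HasAntidiagonal.sigmaAntidiagonalEquivProd_apply]
  rw [Finset.sum_attach (Finset.HasAntidiagonal.antidiagonal n) (fun p => ‖poch a (p.1 + p.2) /
    ((p.1.factorial : ℂ) * (p.2.factorial : ℂ)) * (t : ℂ) ^ (p.1 + p.2) * (u ^ p.1 * v ^ p.2)‖)]
  have : (2 : ℝ) ^ n = ∑ p ∈ Finset.HasAntidiagonal.antidiagonal n, (n.choose p.1 : ℝ) := by
    have := (Commute.all (1 : ℝ) 1).add_pow' n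
    norm_num at this
    simpa using this
  simp only [norm_mul, norm_div, norm_pow, hu, hv, norm_natCast, Complex.norm_real, Real.norm_eq_abs,
    abs_of_nonneg ht, one_pow, mul_one, abs_mul, abs_two, mul_pow, this, Finset.sum_mul,
    Finset.mul_sum]
  refine Finset.sum_congr rfl fun p hp => ?_
  obtain rfl := Finset.HasAntidiagonal.mem_antidiagonal.mp hp
  rw [Nat.cast_add_choose]
  have h1 : (p.1.factorial : ℝ) ≠ 0 := by positivity
  have h2 : (p.2.factorial : ℝ) ≠ 0 := by positivity
  have h3 : ((p.1 + p.2).factorial : ℝ) ≠ 0 := by positivity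
  field_simp

lemma double_hasSum (a : ℂ) (t : ℝ) (ht : 0 ≤ t) (ht2 : 2 * t < 1) (u v : ℂ)
    (hu : ‖u‖ = 1) (hv : ‖v‖ = 1) :
    HasSum (fun p : ℕ × ℕ => poch a (p.1 + p.2) / ((p.1.factorial : ℂ) * (p.2.factorial : ℂ))
      * (t : ℂ) ^ (p.1 + p.2) * (u ^ p.1 * v ^ p.2)) ((1 - t * (u + v)) ^ (-a)) := by
  have hs := double_summable a t ht ht2 u v hu hv
  have hw : ‖(t : ℂ) * (u + v)‖ < 1 := by
    rw [norm_mul, Complex.norm_real, Real.norm_eq_abs, abs_of_nonneg ht]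
    have := norm_add_le u v
    nlinarith
  have hb := binom_hasSum a (t * (u + v)) hw
  have h1 := Finset.HasAntidiagonal.sigmaAntidiagonalEquivProd.hasSum_iff.mpr hs.hasSum
  have h2 := h1.sigma (fun n => hasSum_fintype _)
  have h3 := h2.unique (a₂ := (1 - t * (u + v)) ^ (-a)) (by
    convert hb using 2 with n
    rw [Finset.univ_eq_attach]
    simp only [Function.comp, Finset.HasAntidiagonal.sigmaAntidiagonalEquivProd_apply]
    rw [Finset.sum_attach (Finset.HasAntidiagonal.antidiagonal n) (fun p => poch a (p.1 + p.2) /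
      ((p.1.factorial : ℂ) * (p.2.factorial : ℂ)) * (t : ℂ) ^ (p.1 + p.2) * (u ^ p.1 * v ^ p.2))]
    rw [mul_pow, (Commute.all u v).add_pow' n, Finset.mul_sum, Finset.mul_sum]
    refine Finset.sum_congr rfl fun p hp => ?_
    obtain rfl := Finset.HasAntidiagonal.mem_antidiagonal.mp hp
    rw [nsmul_eq_mul, Nat.cast_add_choose]
    have h1 : (p.1.factorial : ℂ) ≠ 0 := by exact_mod_cast p.1.factorial_ne_zero
    have h2 : (p.2.factorial : ℂ) ≠ 0 := by exact_mod_cast p.2.factorial_ne_zero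
    have h3 : ((p.1 + p.2).factorial : ℂ) ≠ 0 := by exact_mod_cast (p.1+p.2).factorial_ne_zero
    field_simp)
  rw [← h3]
  exact hs.hasSum

/-- Reindexing `ℤ × ℕ ≃ ℕ × ℕ`. -/
def diagEquiv : ℤ × ℕ ≃ ℕ × ℕ where
  toFun p := (p.1.toNat + p.2, (-p.1).toNat + p.2)
  invFun p := ((p.1 : ℤ) - p.2, min p.1 p.2)
  left_inv p := by
    ext
    · simp only; lia
    · simp only; lia
  right_inv p := by
    ext
    · simp only; lia
    · simp only; lia

lemma poch_split (a : ℂ) (m k : ℕ) : poch a (m + 2 * k) =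
    poch a m * (4 ^ k * poch ((a + m + 1) / 2) k * poch ((a + m) / 2) k) := by
  induction k with
  | zero => simp [poch]
  | succ k ih =>
    rw [show m + 2 * (k + 1) = (m + 2 * k) + 1 + 1 by ring]
    simp only [poch, Finset.prod_range_succ] at ih ⊢
    rw [ih]; push_cast; ring

lemma poch_fact (m k : ℕ) : poch ((m : ℂ) + 1) k * (m.factorial : ℂ) = ((m + k).factorial : ℂ) := by
  induction k with
  | zero => simp [poch]
  | succ k ih =>
    rw [← add_assoc, Nat.factorial_succ]
    simp only [poch, Finset.prod_range_succ] at ih ⊢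
    push_cast
    rw [← ih]; ring

lemma Gamma_poch (a : ℂ) (ha : ∀ k : ℕ, a ≠ -k) (m : ℕ) :
    Gamma (a + m) = poch a m * Gamma a := by
  rw [poch_eq, ← Complex.Gamma_add_nat_div_Gamma_eq a ha,
    div_mul_cancel₀ _ (Complex.Gamma_ne_zero ha)]

lemma fourier_hasSum (a : ℂ) (z : ℝ) (hz : 1 < z) (ψ : ℝ) :
    HasSum (fun m : ℤ => exp (I * (m : ℂ) * (ψ : ℂ)) *
      (poch a m.natAbs / (m.natAbs.factorial : ℂ) * (1 / (2 * z : ℂ)) ^ m.natAbs *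
        hyp2F1 ((a + m.natAbs + 1) / 2) ((a + m.natAbs) / 2) (m.natAbs + 1) (1 / (z : ℂ) ^ 2)))
      ((1 - Real.cos ψ / z : ℂ) ^ (-a)) := by
  have hz0 : (z : ℂ) ≠ 0 := by exact_mod_cast (by linarith : z ≠ 0)
  have h := double_hasSum a (1 / (2 * z)) (by positivity)
    (by rw [mul_one_div, div_lt_one (by positivity)]; linarith) (exp (ψ * I)) (exp (-ψ * I))
    (Complex.norm_exp_ofReal_mul_I ψ) (by exact_mod_cast Complex.norm_exp_ofReal_mul_I (-ψ))
  have hc : (1 : ℂ) - ((1 / (2 * z) : ℝ) : ℂ) * (exp (ψ * I) + exp (-ψ * I)) = 1 - Real.cos ψ / z := by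
    rw [Complex.ofReal_cos, Complex.cos]
    push_cast
    field_simp
  rw [hc] at h
  have h1 := diagEquiv.hasSum_iff.mpr h
  have h2 := h1.prod_fiberwise (fun m => (h1.summable.prod_factor m).hasSum)
  convert h2 using 2 with m
  rw [hyp2F1, ← tsum_mul_left, ← tsum_mul_left]
  refine tsum_congr fun k => ?_
  have hk : (k.factorial : ℂ) ≠ 0 := by exact_mod_cast k.factorial_ne_zero
  have hm : (m.natAbs.factorial : ℂ) ≠ 0 := by exact_mod_cast m.natAbs.factorial_ne_zero
  have hmk : ((m.natAbs + k).factorial : ℂ) ≠ 0 := by exact_mod_cast (m.natAbs+k).factorial_ne_zero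
  have hp : poch ((m.natAbs : ℂ) + 1) k = ((m.natAbs + k).factorial : ℂ) / m.natAbs.factorial := by
    rw [← poch_fact, mul_div_cancel_right₀ _ hm]
  have e0 : ((m.toNat + k) + ((-m).toNat + k)) = m.natAbs + 2 * k := by lia
  have e1 : (exp (ψ * I)) ^ (m.toNat + k) * (exp (-ψ * I)) ^ ((-m).toNat + k)
      = exp (I * (m : ℂ) * (ψ : ℂ)) := by
    rw [← Complex.exp_nat_mul, ← Complex.exp_nat_mul, ← Complex.exp_add]
    congr 1
    have : (m : ℂ) = (m.toNat : ℂ) - ((-m).toNat : ℂ) := by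
      exact_mod_cast (by lia : m = (m.toNat : ℤ) - ((-m).toNat : ℤ))
    rw [this]; push_cast; ring
  have e2 : ((m.toNat + k).factorial : ℂ) * (((-m).toNat + k).factorial : ℂ)
      = (m.natAbs + k).factorial * k.factorial := by
    rcases le_total 0 m with h | h
    · rw [show m.toNat = m.natAbs by lia, show (-m).toNat = 0 by lia, zero_add]
    · rw [show (-m).toNat = m.natAbs by lia, show m.toNat = 0 by lia, zero_add, mul_comm]
  simp only [Function.comp, diagEquiv, Equiv.coe_fn_mk]
  rw [e0, e1, e2, hp, poch_split, pow_add, pow_mul]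
  push_cast
  rw [show (1 / (2 * (z : ℂ))) ^ 2 = 4⁻¹ * (1 / (z : ℂ) ^ 2) by field_simp; norm_num, mul_pow, inv_pow]
  field_simp

lemma sq_cpow_real (x : ℝ) (hx : 0 < x) (s : ℂ) : ((x : ℂ) ^ 2) ^ s = (x : ℂ) ^ (2 * s) := by
  have hx' : (x : ℂ) ≠ 0 := by exact_mod_cast hx.ne'
  rw [sq, Complex.mul_cpow_ofReal_nonneg hx.le hx.le, ← Complex.cpow_add _ _ hx', two_mul]

lemma cpow_half_real (x : ℝ) (hx : 0 ≤ x) : (x : ℂ) ^ (1 / 2 : ℂ) = (Real.sqrt x : ℂ) := by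
  rw [Real.sqrt_eq_rpow, Complex.ofReal_cpow hx]
  norm_num

lemma key_term (ν : ℂ) (hν : ∀ m : ℕ, ν ≠ 2 * (m : ℂ)) (r r' z D : ℝ) (hr : 0 < r) (hr' : 0 < r')
    (hD : 0 < D) (hz0 : 0 < z) (hz : z ^ 2 - 1 = (D / (2 * r * r')) ^ 2) (m : ℕ) :
    Complex.exp (Real.pi * I * (ν + 1) / 2) / Complex.Gamma (-ν / 2) *
        ((D : ℂ) ^ ((ν + 1) / 2) / (Real.sqrt (Real.pi * r * r') : ℂ)) *
      legendreQ ((m : ℂ) - 1 / 2) (-(ν + 1) / 2) (z : ℂ) =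
    (((2 * r * r' : ℝ) : ℂ) ^ (-(-ν / 2)) * (z : ℂ) ^ (-(-ν / 2))) *
      (poch (-ν / 2) m / (m.factorial : ℂ) * (1 / (2 * z : ℂ)) ^ m *
        hyp2F1 ((-ν / 2 + m + 1) / 2) ((-ν / 2 + m) / 2) (m + 1) (1 / (z : ℂ) ^ 2)) := by
  obtain ⟨a, ha⟩ : ∃ a, a = -ν / 2 := ⟨_, rfl⟩
  have hν' : ν = -2 * a := by rw [ha]; ring
  have haΓ : ∀ k : ℕ, a ≠ -k := by
    intro k hk
    exact hν k (by rw [hν', hk]; ring)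
  set R : ℝ := 2 * r * r' with hR
  have hRpos : 0 < R := by positivity
  have hRc : (R : ℂ) ≠ 0 := by exact_mod_cast hRpos.ne'
  have hzc : (z : ℂ) ≠ 0 := by exact_mod_cast hz0.ne'
  have hDR : 0 < D / R := by positivity
  have hDRc : ((D / R : ℝ) : ℂ) ≠ 0 := by exact_mod_cast hDR.ne'
  rw [legendreQ, ← ha]
  have p1 : ((m : ℂ) - 1 / 2 + -(ν + 1) / 2 + 2) / 2 = (a + m + 1) / 2 := by rw [ha]; ring
  have p2 : ((m : ℂ) - 1 / 2 + -(ν + 1) / 2 + 1) = a + m := by rw [ha]; ring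
  have p3 : (m : ℂ) - 1 / 2 + 3 / 2 = m + 1 := by ring
  have p4 : (m : ℂ) - 1 / 2 + 1 = m + 1 / 2 := by ring
  rw [p1, p2, p3, p4, Gamma_poch a haΓ, Complex.Gamma_nat_eq_factorial,
    Complex.cpow_add _ _ hzc, Complex.cpow_natCast, Complex.cpow_add _ _ two_ne_zero,
    Complex.cpow_natCast]
  have q1 : ((z : ℂ) ^ 2 - 1) ^ (-(ν + 1) / 2 / 2) = ((D / R : ℝ) : ℂ) ^ (-((ν + 1) / 2)) := by
    have : (z : ℂ) ^ 2 - 1 = ((D / R : ℝ) : ℂ) ^ 2 := by exact_mod_cast hz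
    rw [this, sq_cpow_real _ hDR]
    congr 1; ring
  have q2 : (D : ℂ) ^ ((ν + 1) / 2) = ((D / R : ℝ) : ℂ) ^ ((ν + 1) / 2) * (R : ℂ) ^ ((ν + 1) / 2) := by
    rw [← Complex.mul_cpow_ofReal_nonneg hDR.le hRpos.le, ← Complex.ofReal_mul,
      div_mul_cancel₀ _ hRpos.ne']
  have q3 : (R : ℂ) ^ ((ν + 1) / 2) = (R : ℂ) ^ (-a) * (Real.sqrt R : ℂ) := by
    rw [← cpow_half_real R hRpos.le, ← Complex.cpow_add _ _ hRc]
    congr 1; rw [ha]; ring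
  have q4 : (2 : ℂ) ^ (1 / 2 : ℂ) = (Real.sqrt 2 : ℂ) := by
    simpa using cpow_half_real 2 (by norm_num)
  have q5 : (Real.sqrt Real.pi : ℂ) * (Real.sqrt R : ℂ)
      = (Real.sqrt (Real.pi * r * r') : ℂ) * (Real.sqrt 2 : ℂ) := by
    rw [← Complex.ofReal_mul, ← Complex.ofReal_mul, ← Real.sqrt_mul Real.pi_pos.le,
      ← Real.sqrt_mul (by positivity)]
    congr 2; rw [hR]; ring
  have q6 : Complex.exp (Real.pi * I * (-(ν + 1) / 2)) = (Complex.exp (Real.pi * I * (ν + 1) / 2))⁻¹ := by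
    rw [← Complex.exp_neg]; congr 1; ring
  rw [q1, q2, q3, q4, q6, Complex.cpow_neg (z : ℂ), Complex.cpow_neg ((D / R : ℝ) : ℂ)]
  have n1 : ((D / R : ℝ) : ℂ) ^ ((ν + 1) / 2) ≠ 0 :=
    fun h => hDRc ((Complex.cpow_eq_zero_iff _ _).mp h).1
  have n2 : (z : ℂ) ^ a ≠ 0 := by simp [Complex.cpow_eq_zero_iff, hzc]
  have n3 : (Real.sqrt 2 : ℂ) ≠ 0 := by
    exact_mod_cast (Real.sqrt_pos.mpr (by norm_num : (0 : ℝ) < 2)).ne'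
  have n4 : (Real.sqrt (Real.pi * r * r') : ℂ) ≠ 0 := by
    exact_mod_cast (Real.sqrt_pos.mpr (by positivity : (0 : ℝ) < Real.pi * r * r')).ne'
  have n5 : (m.factorial : ℂ) ≠ 0 := by exact_mod_cast m.factorial_ne_zero
  have n6 := Complex.Gamma_ne_zero haΓ
  have n7 := Complex.exp_ne_zero (Real.pi * I * (ν + 1) / 2)
  generalize Complex.exp (Real.pi * I * (ν + 1) / 2) = E at *
  generalize hyp2F1 ((a + m + 1) / 2) ((a + m) / 2) (m + 1) (1 / (z : ℂ) ^ 2) = H at *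
  generalize ((D / R : ℝ) : ℂ) ^ ((ν + 1) / 2) = A at *
  generalize (z : ℂ) ^ a = Z at *
  generalize (R : ℂ) ^ (-a) = B at *
  generalize Gamma a = G at *
  generalize (Real.sqrt (Real.pi * r * r') : ℂ) = S at *
  generalize (Real.sqrt 2 : ℂ) = s2 at *
  generalize (Real.sqrt R : ℂ) = sR at *
  generalize (Real.sqrt Real.pi : ℂ) = sp at *
  rw [one_div, inv_pow, mul_pow]
  field_simp
  linear_combination (B * poch a m * H) * q5

/-- the azimuthal Fourier expansion of `‖x - x'‖^ν` on `ℝ²`, where for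
negative `m` the degree `m - 1/2` is interpreted via the symmetry
`Q_{m-1/2} = Q_{-m-1/2}` (i.e. using `|m| - 1/2`). -/
theorem power_law_fourier_expansion_R2
    (ν : ℂ) (hν : ∀ m : ℕ, ν ≠ 2 * (m : ℂ))
    (r r' φ φ' : ℝ) (hr : 0 < r) (hr' : 0 < r') (hne : r ≠ r')
    (x x' : EuclideanSpace ℝ (Fin 2))
    (hx0 : x 0 = r * Real.cos φ) (hx1 : x 1 = r * Real.sin φ)
    (hx'0 : x' 0 = r' * Real.cos φ') (hx'1 : x' 1 = r' * Real.sin φ') :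
    (‖x - x'‖ : ℂ) ^ ν =
      Complex.exp (Real.pi * I * (ν + 1) / 2) / Complex.Gamma (-ν / 2) *
        ((((max r r') ^ 2 - (min r r') ^ 2 : ℝ) : ℂ) ^ ((ν + 1) / 2) /
          (Real.sqrt (Real.pi * r * r') : ℂ)) *
        ∑' m : ℤ,
          Complex.exp (I * (m : ℂ) * ((φ : ℂ) - (φ' : ℂ))) *
            legendreQ ((m.natAbs : ℂ) - 1 / 2) (-(ν + 1) / 2)
              (((r ^ 2 + r' ^ 2) / (2 * r * r') : ℝ) : ℂ) := by
  obtain ⟨D, hDdef⟩ : ∃ D : ℝ, D = (max r r') ^ 2 - (min r r') ^ 2 := ⟨_, rfl⟩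
  obtain ⟨z, hzdef⟩ : ∃ z : ℝ, z = (r ^ 2 + r' ^ 2) / (2 * r * r') := ⟨_, rfl⟩
  rw [← hDdef, ← hzdef]
  have hR : 0 < 2 * r * r' := by positivity
  have hD : 0 < D := by
    have h1 : min r r' < max r r' := min_lt_max.mpr hne
    have h2 : 0 < min r r' := lt_min hr hr'
    rw [hDdef]; nlinarith
  have hD2 : D ^ 2 = (r ^ 2 - r' ^ 2) ^ 2 := by
    rw [hDdef]
    rcases le_total r r' with h | h
    · rw [max_eq_right h, min_eq_left h]; ring
    · rw [max_eq_left h, min_eq_right h]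
  have hz1 : 1 < z := by
    rw [hzdef, one_lt_div hR]
    have := sq_pos_of_ne_zero (sub_ne_zero.mpr hne)
    nlinarith
  have hzD : z ^ 2 - 1 = (D / (2 * r * r')) ^ 2 := by
    rw [div_pow, hD2, hzdef]; field_simp; ring
  have hF := (fourier_hasSum (-ν / 2) z hz1 (φ - φ')).tsum_eq
  have hcos : Real.cos (φ - φ') ≤ 1 := Real.cos_le_one _
  have hw : 0 ≤ 1 - Real.cos (φ - φ') / z := by
    rw [sub_nonneg, div_le_one (by linarith)]; linarith
  have hnorm : ‖x - x'‖ ^ 2 = (2 * r * r') * z * (1 - Real.cos (φ - φ') / z) := by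
    rw [EuclideanSpace.norm_sq_eq, Fin.sum_univ_two]
    have hz0 : z ≠ 0 := by linarith
    have e1 : (2 * r * r') * z * (1 - Real.cos (φ - φ') / z)
        = (2 * r * r') * z - (2 * r * r') * Real.cos (φ - φ') := by field_simp
    have e2 : (2 * r * r') * z = r ^ 2 + r' ^ 2 := by rw [hzdef]; field_simp
    rw [e1, e2, Real.cos_sub]
    simp only [PiLp.sub_apply, hx0, hx1, hx'0, hx'1, Real.norm_eq_abs, sq_abs]
    linear_combination (r ^ 2) * Real.sin_sq_add_cos_sq φ + (r' ^ 2) * Real.sin_sq_add_cos_sq φ'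
  have hnpos : 0 < ‖x - x'‖ := by
    have hw' : 0 < 1 - Real.cos (φ - φ') / z := by
      rw [sub_pos, div_lt_one (by linarith)]; linarith
    have : 0 < ‖x - x'‖ ^ 2 := by rw [hnorm]; positivity
    exact (norm_nonneg _).lt_of_ne (fun h => by rw [← h] at this; norm_num at this)
  have hL : (‖x - x'‖ : ℂ) ^ ν = (((2 * r * r' : ℝ) : ℂ) ^ (-(-ν / 2)) * (z : ℂ) ^ (-(-ν / 2))) *
      ((1 - Real.cos (φ - φ') / z : ℂ) ^ (-(-ν / 2))) := by
    have h1 : (‖x - x'‖ : ℂ) ^ ν = ((‖x - x'‖ : ℂ) ^ 2) ^ (-(-ν / 2)) := by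
      rw [sq_cpow_real _ hnpos]; congr 1; ring
    rw [h1, ← Complex.ofReal_pow, hnorm, Complex.ofReal_mul,
      Complex.mul_cpow_ofReal_nonneg (by positivity) hw, Complex.ofReal_mul,
      Complex.mul_cpow_ofReal_nonneg hR.le (by linarith)]
    push_cast
    rfl
  rw [hL, ← hF, ← tsum_mul_left, ← tsum_mul_left]
  refine tsum_congr fun m => ?_
  have hk := key_term ν hν r r' z D hr hr' hD (by linarith) hzD m.natAbs
  rw [mul_left_comm, ← hk, mul_left_comm, Complex.ofReal_sub]
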